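/- Let 𝒳, 𝒴, 𝒵, ℳ be finite sets, P_{XYZ}, Q_{XYZ} pmfs, and let (M, X^n, Y^n, Z^n) be distributed under P as P_{M|X^n} ∏_{i=1}^n P_{X_i Y_i Z_i} and under Q as P_{M|X^n} ∏_{i=1}^n Q_{X_i Y_i Z_i} (same channel). Then for every 0 ≤ i ≤ n, D(P_{M Y^i Z_{i+1}^n} ‖ Q_{M Y^i Z_{i+1}^n}) ≤ i · D(P_{XY} ‖ Q_{XY}) + (n−i) · D(P_{XZ} ‖ Q_{XZ}) (in the extended reals); in particular all these divergences are finite when D(P_{XY}‖Q_{XY}) < ∞ and D(P_{XZ}‖Q_{XZ}) < ∞. -/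

import Mathlib

open scoped BigOperators

noncomputable section

open Classical in
/-- Pushforward of a finitely supported mass function along a map. -/
def pushf {Ω α : Type*} [Fintype Ω] (p : Ω → ℝ) (f : Ω → α) : α → ℝ :=
  fun a => ∑ ω, if f ω = a then p ω else 0

/-- `p` is a probability mass function. -/
def IsPMF {α : Type*} [Fintype α] (p : α → ℝ) : Prop :=
  (∀ a, 0 ≤ p a) ∧ ∑ a, p a = 1

/-- Kullback–Leibler divergence `D(p‖q)` of mass functions, valued in `EReal`
(equal to `⊤` if `p` is not absolutely continuous w.r.t. `q`). -/
def klDiv {α : Type*} [Fintype α] (p q : α → ℝ) : EReal :=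
  if ∀ a, q a = 0 → p a = 0 then ((∑ a, p a * Real.log (p a / q a) : ℝ) : EReal) else ⊤

/-- Shannon entropy. -/
def entropy {α : Type*} [Fintype α] (p : α → ℝ) : ℝ :=
  -∑ a, p a * Real.log (p a)

/-- Conditional mutual information `I(A;B|C)` under the mass function `p`. -/
def condMI {Ω α β γ : Type*} [Fintype Ω] [Fintype α] [Fintype β] [Fintype γ]
    (p : Ω → ℝ) (A : Ω → α) (B : Ω → β) (C : Ω → γ) : ℝ :=
  entropy (pushf p (fun ω => (A ω, C ω))) + entropy (pushf p (fun ω => (B ω, C ω)))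
    - entropy (pushf p (fun ω => (A ω, B ω, C ω))) - entropy (pushf p C)

/-- First marginal of a joint mass function. -/
def margFst {α β : Type*} [Fintype α] [Fintype β] (p : α × β → ℝ) : α → ℝ :=
  fun a => ∑ b, p (a, b)

/-- Conditional mass function of the second coordinate given the first. -/
def condSnd {α β : Type*} [Fintype α] [Fintype β] (p : α × β → ℝ) : α → β → ℝ :=
  fun a b => p (a, b) / margFst p a

/-- Output distribution of a channel on an input distribution. -/
def outDist {α β : Type*} [Fintype α] [Fintype β] (ch : α → β → ℝ) (pa : α → ℝ) : β → ℝ :=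
  fun b => ∑ a, pa a * ch a b

/-- The difference functional
`f(P'_X) = sup_{Q̂_X ≪ Q_X} D(P'_Y‖Q̂_Y) − D(P'_Z‖Q̂_Z)`. -/
def fdiff {X Y Z : Type*} [Fintype X] [Fintype Y] [Fintype Z]
    (pYgX : X → Y → ℝ) (pZgX : X → Z → ℝ) (qYgX : X → Y → ℝ) (qZgX : X → Z → ℝ)
    (qX : X → ℝ) (pX' : X → ℝ) : EReal :=
  sSup {d : EReal | ∃ qhX : X → ℝ, IsPMF qhX ∧ (∀ x, qX x = 0 → qhX x = 0) ∧
    d = klDiv (outDist pYgX pX') (outDist qYgX qhX)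
        - klDiv (outDist pZgX pX') (outDist qZgX qhX)}

/-- The quantity `G_{P_XY, Q_XY, P_XZ, Q_XZ}(R)`: the supremum over finite sets `𝒰`
(represented by `Fin m`) and channels `P_{U|X}` with `I_P(U;X|Y) ≤ R` and `I_P(U;X|Z) ≤ R`
of `∑_u P_U(u) f(P_{X|U}(·|u))`. -/
def Gexp {X Y Z : Type*} [Fintype X] [Fintype Y] [Fintype Z]
    (pXY : X × Y → ℝ) (qXY : X × Y → ℝ) (pXZ : X × Z → ℝ) (qXZ : X × Z → ℝ)
    (R : ℝ) : EReal :=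
  sSup {v : EReal | ∃ (m : ℕ) (ch : X → Fin m → ℝ),
    (∀ x, IsPMF (ch x)) ∧
    condMI (fun w : Fin m × X × Y => ch w.2.1 w.1 * pXY (w.2.1, w.2.2))
      (fun w => w.1) (fun w => w.2.1) (fun w => w.2.2) ≤ R ∧
    condMI (fun w : Fin m × X × Z => ch w.2.1 w.1 * pXZ (w.2.1, w.2.2))
      (fun w => w.1) (fun w => w.2.1) (fun w => w.2.2) ≤ R ∧
    v = ∑ u : Fin m,
      ((∑ x, ch x u * margFst pXY x : ℝ) : EReal) *
        fdiff (condSnd pXY) (condSnd pXZ) (condSnd qXY) (condSnd qXZ)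
          (margFst qXY)
          (fun x => ch x u * margFst pXY x / ∑ x', ch x' u * margFst pXY x')}

/-- The error exponent of distributed hypothesis testing, via the Ahlswede–Csiszár
multi-letter characterization. -/
def errExp {X W : Type*} [Fintype X] [Fintype W]
    (pXW qXW : X × W → ℝ) (R : ℝ) : EReal :=
  sSup {v : EReal | ∃ n : ℕ, 0 < n ∧
    ∃ κ : (Fin n → X) → Fin (2 ^ ⌊(n : ℝ) * R⌋₊) → ℝ,
      (∀ x, IsPMF (κ x)) ∧
      v = (((n : ℝ)⁻¹ : ℝ) : EReal) *
        klDiv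
          (fun mw : Fin (2 ^ ⌊(n : ℝ) * R⌋₊) × (Fin n → W) =>
            ∑ x : Fin n → X, (∏ i, pXW (x i, mw.2 i)) * κ x mw.1)
          (fun mw : Fin (2 ^ ⌊(n : ℝ) * R⌋₊) × (Fin n → W) =>
            ∑ x : Fin n → X, (∏ i, qXW (x i, mw.2 i)) * κ x mw.1)}

/-!
The message and the observed side information are a channel output together with a function of the
letters `(X_j, Y_j)` for `j ≤ i` and `(X_j, Z_j)` for `j > i`: the channel reads only the source
symbols, and these are part of every letter. By data processing the divergence does not decrease
when all these letters are revealed in full, and then the message contributes nothing, because its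
conditional law is the same channel under `P` and `Q`. What remains is the divergence between two
product laws, which is the sum of the single-letter divergences. Data processing itself is the
log-sum inequality on each fibre.
-/

section Pushforward

variable {Ω α β : Type*} [Fintype Ω]

theorem pushf_apply_eq_sum_filter [DecidableEq α] (p : Ω → ℝ) (f : Ω → α) (a : α) :
    pushf p f a = ∑ ω with f ω = a, p ω := by
  rw [pushf, Finset.sum_filter]
  congr!

theorem pushf_nonneg {p : Ω → ℝ} {f : Ω → α} (hp : ∀ ω, 0 ≤ p ω) (a : α) : 0 ≤ pushf p f a := by
  classical
  rw [pushf_apply_eq_sum_filter]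
  exact Finset.sum_nonneg fun ω _ => hp ω

theorem sum_pushf [Fintype α] (p : Ω → ℝ) (f : Ω → α) : ∑ a, pushf p f a = ∑ ω, p ω := by
  have := Classical.decEq α
  simp only [pushf_apply_eq_sum_filter, Finset.sum_fiberwise]

theorem pushf_pushf [Fintype α] (p : Ω → ℝ) (f : Ω → α) (g : α → β) :
    pushf (pushf p f) g = pushf p (g ∘ f) := by
  have := Classical.decEq α
  have := Classical.decEq β
  funext b
  simp only [pushf_apply_eq_sum_filter, Finset.sum_fiberwise_eq_sum_filter, Finset.mem_filter_univ,
    Function.comp_apply]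

theorem pushf_comp_equiv {Ω' : Type*} [Fintype Ω'] (e : Ω' ≃ Ω) (p : Ω → ℝ) (f : Ω → α) :
    pushf (p ∘ e) (f ∘ e) = pushf p f := by
  classical
  funext a
  exact e.sum_comp fun ω => if f ω = a then p ω else 0

theorem pushf_pi {ι : Type*} [Fintype ι] [DecidableEq ι] {Ω α : ι → Type*} [∀ j, Fintype (Ω j)]
    (p : ∀ j, Ω j → ℝ) (f : ∀ j, Ω j → α j) :
    pushf (fun ω : ∀ j, Ω j => ∏ j, p j (ω j)) (fun ω j => f j (ω j)) =
      fun a => ∏ j, pushf (p j) (f j) (a j) := by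
  classical
  funext a
  simp only [pushf, Fintype.prod_sum, Finset.prod_ite_zero, funext_iff, Finset.mem_univ,
    true_imp_iff]

theorem pushf_channel {M : Type*} [Fintype M] (κ : α → M → ℝ) (p : Ω → ℝ) (f : Ω → α) :
    pushf (fun w : M × Ω => κ (f w.2) w.1 * p w.2) (fun w => (w.1, f w.2)) =
      fun b => κ b.2 b.1 * pushf p f b.2 := by
  classical
  funext ⟨m, a⟩
  have weight (ω : Ω) : (if f ω = a then κ (f ω) m * p ω else 0) =
      κ a m * if f ω = a then p ω else 0 := by
    split_ifs with h <;> simp [h]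
  simp only [pushf, Fintype.sum_prod_type, Prod.mk.injEq, ite_and, Finset.sum_ite_irrel,
    Finset.sum_const_zero, Finset.sum_ite_eq', Finset.mem_univ, if_true, weight, Finset.mul_sum]

end Pushforward

section DataProcessing

theorem sum_mul_log_div_sum_le {ι : Type*} (s : Finset ι) {p q : ι → ℝ}
    (hp : ∀ i ∈ s, 0 ≤ p i) (hq : ∀ i ∈ s, 0 ≤ q i) (hpq : ∀ i ∈ s, q i = 0 → p i = 0) :
    (∑ i ∈ s, p i) * Real.log ((∑ i ∈ s, p i) / ∑ i ∈ s, q i) ≤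
      ∑ i ∈ s, p i * Real.log (p i / q i) := by
  rcases (Finset.sum_nonneg hq).eq_or_lt with hq0 | hqpos
  · have hp0 : ∀ i ∈ s, p i = 0 := fun i hi =>
      hpq i hi ((Finset.sum_eq_zero_iff_of_nonneg hq).mp hq0.symm i hi)
    rw [Finset.sum_eq_zero hp0, zero_mul,
      Finset.sum_eq_zero fun i hi => mul_eq_zero_of_left (hp0 i hi) _]
  set S := ∑ i ∈ s, q i
  have cancel (i) (hi : i ∈ s) : q i / S * (p i / q i) = p i / S := by
    rcases eq_or_ne (q i) 0 with h | h
    · simp [h, hpq i hi h]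
    · field_simp
  -- Jensen for `x log x` at the points `p i / q i` with weights `q i / S`.
  have jensen := Real.convexOn_mul_log.map_sum_le (t := s) (w := fun i => q i / S)
    (p := fun i => p i / q i) (fun i hi => div_nonneg (hq i hi) hqpos.le)
    (by rw [← Finset.sum_div, div_self hqpos.ne'])
    (fun i hi => Set.mem_Ici.mpr (div_nonneg (hp i hi) (hq i hi)))
  simp only [smul_eq_mul, ← mul_assoc] at jensen
  rw [Finset.sum_congr rfl cancel, ← Finset.sum_div,
    Finset.sum_congr rfl fun i hi => congrArg (· * _) (cancel i hi)] at jensen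
  simp only [div_mul_eq_mul_div, ← Finset.sum_div] at jensen
  exact (div_le_div_iff_of_pos_right hqpos).mp jensen

variable {Ω α β : Type*} [Fintype Ω] {p q : Ω → ℝ} {f : Ω → α}

theorem pushf_eq_zero_of_pushf_eq_zero (hq : ∀ ω, 0 ≤ q ω) (hpq : ∀ ω, q ω = 0 → p ω = 0) {a : α}
    (ha : pushf q f a = 0) : pushf p f a = 0 := by
  classical
  rw [pushf_apply_eq_sum_filter] at ha ⊢
  rw [Finset.sum_eq_zero_iff_of_nonneg fun ω _ => hq ω] at ha
  exact Finset.sum_eq_zero fun ω hω => hpq ω (ha ω hω)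

theorem klDiv_pushf_le [Fintype α] (hp : ∀ ω, 0 ≤ p ω) (hq : ∀ ω, 0 ≤ q ω) :
    klDiv (pushf p f) (pushf q f) ≤ klDiv p q := by
  classical
  by_cases hpq : ∀ ω, q ω = 0 → p ω = 0
  swap
  · simp [klDiv, hpq]
  rw [klDiv, klDiv, if_pos hpq, if_pos fun a => pushf_eq_zero_of_pushf_eq_zero hq hpq,
    EReal.coe_le_coe_iff, ← Finset.sum_fiberwise Finset.univ f]
  gcongr with a
  simp only [pushf_apply_eq_sum_filter]
  exact sum_mul_log_div_sum_le _ (fun ω _ => hp ω) (fun ω _ => hq ω) fun ω _ => hpq ω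

theorem klDiv_pushf_le_of_factorsThrough [Fintype α] [Fintype β] {g : Ω → β} (hp : ∀ ω, 0 ≤ p ω)
    (hq : ∀ ω, 0 ≤ q ω) (hgf : g.FactorsThrough f) :
    klDiv (pushf p g) (pushf q g) ≤ klDiv (pushf p f) (pushf q f) := by
  cases isEmpty_or_nonempty Ω
  · simp [klDiv, pushf]
  have : Nonempty β := .map g ‹_›
  obtain ⟨e, rfl⟩ := (Function.factorsThrough_iff g).mp hgf
  rw [← pushf_pushf, ← pushf_pushf]
  exact klDiv_pushf_le (pushf_nonneg hp) (pushf_nonneg hq)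

end DataProcessing

section ChainRule

variable {α : Type*} [Fintype α]

theorem klDiv_eq_top {p q : α → ℝ} {a : α} (hq : q a = 0) (hp : p a ≠ 0) : klDiv p q = ⊤ :=
  if_neg fun h => hp (h a hq)

theorem klDiv_ne_bot (p q : α → ℝ) : klDiv p q ≠ ⊥ := by
  unfold klDiv
  split_ifs
  · exact EReal.coe_ne_bot _
  · exact top_ne_bot

theorem klDiv_channel {M : Type*} [Fintype M] {κ : α → M → ℝ} (hκ : ∀ a, ∑ m, κ a m = 1)
    (p q : α → ℝ) :
    klDiv (fun w : M × α => κ w.2 w.1 * p w.2) (fun w => κ w.2 w.1 * q w.2) = klDiv p q := by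
  by_cases hpq : ∀ a, q a = 0 → p a = 0
  · have term (a : α) (m : M) : κ a m * p a * Real.log (κ a m * p a / (κ a m * q a)) =
        κ a m * (p a * Real.log (p a / q a)) := by
      rcases eq_or_ne (κ a m) 0 with h | h
      · simp [h]
      · rw [mul_div_mul_left _ _ h, mul_assoc]
    rw [klDiv, klDiv, if_pos hpq, if_pos (by grind), Fintype.sum_prod_type_right]
    simp only [term, ← Finset.sum_mul, hκ, one_mul]
  · push Not at hpq
    obtain ⟨a, hq, hp⟩ := hpq
    obtain ⟨m, -, hm⟩ := Finset.exists_ne_zero_of_sum_ne_zero ((hκ a).trans_ne one_ne_zero)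
    rw [klDiv_eq_top hq hp, klDiv_eq_top (a := (m, a)) (by simp [hq]) (mul_ne_zero hm hp)]

end ChainRule

section Tensorization

variable {ι : Type*} [Fintype ι] [DecidableEq ι] {Ω : ι → Type*} [∀ j, Fintype (Ω j)]

theorem sum_prod_mul_apply {p : ∀ j, Ω j → ℝ} {i : ι} (hp : ∀ j ≠ i, ∑ a, p j a = 1)
    (g : Ω i → ℝ) :
    ∑ ω : ∀ j, Ω j, (∏ j, p j (ω j)) * g (ω i) = ∑ a, p i a * g a := by
  let p' := Function.update p i fun a => p i a * g a
  have p'_self : p' i = fun a => p i a * g a := Function.update_self ..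
  have p'_of_ne {j : ι} (hj : j ≠ i) : p' j = p j := Function.update_of_ne hj ..
  have prod_p' (ω : ∀ j, Ω j) : (∏ j, p j (ω j)) * g (ω i) = ∏ j, p' j (ω j) := by
    rw [Fintype.prod_eq_mul_prod_compl i, Fintype.prod_eq_mul_prod_compl i fun j => p' j (ω j),
      p'_self, mul_right_comm]
    congr 1
    exact Finset.prod_congr rfl fun j hj => by rw [p'_of_ne (by simpa using hj)]
  rw [Fintype.sum_congr _ _ prod_p', ← Fintype.prod_sum, Fintype.prod_eq_single i, p'_self]
  exact fun j hj => by rw [p'_of_ne hj, hp j hj]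

theorem klDiv_pi_of_absolutelyContinuous {p q : ∀ j, Ω j → ℝ} (hp : ∀ j, ∑ a, p j a = 1)
    (hpq : ∀ j a, q j a = 0 → p j a = 0) :
    klDiv (fun ω : ∀ j, Ω j => ∏ j, p j (ω j)) (fun ω => ∏ j, q j (ω j)) =
      ∑ j, klDiv (p j) (q j) := by
  have ac (ω : ∀ j, Ω j) (h : ∏ j, q j (ω j) = 0) : ∏ j, p j (ω j) = 0 := by
    obtain ⟨j, -, hj⟩ := Finset.prod_eq_zero_iff.mp h
    exact Finset.prod_eq_zero (Finset.mem_univ j) (hpq j _ hj)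
  have term (ω : ∀ j, Ω j) :
      (∏ j, p j (ω j)) * Real.log ((∏ j, p j (ω j)) / ∏ j, q j (ω j)) =
        ∑ i, (∏ j, p j (ω j)) * Real.log (p i (ω i) / q i (ω i)) := by
    by_cases h : ∏ j, p j (ω j) = 0
    · simp [h]
    have hpj (j : ι) : p j (ω j) ≠ 0 := Finset.prod_ne_zero_iff.mp h j (Finset.mem_univ j)
    rw [← Finset.prod_div_distrib, ← Finset.mul_sum,
      Real.log_prod fun j _ => div_ne_zero (hpj j) (mt (hpq j _) (hpj j))]
  have coe_sum (f : ι → ℝ) : ((∑ j, f j : ℝ) : EReal) = ∑ j, (f j : EReal) :=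
    map_sum (⟨⟨Real.toEReal, EReal.coe_zero⟩, EReal.coe_add⟩ : ℝ →+ EReal) f Finset.univ
  rw [klDiv, if_pos ac, Fintype.sum_congr _ _ term, Finset.sum_comm, coe_sum]
  refine Fintype.sum_congr _ _ fun i => ?_
  rw [klDiv, if_pos (hpq i), sum_prod_mul_apply (fun j _ => hp j) fun a => Real.log (p i a / q i a)]

theorem klDiv_pi {p : ∀ j, Ω j → ℝ} (hp : ∀ j, ∑ a, p j a = 1) (q : ∀ j, Ω j → ℝ) :
    klDiv (fun ω : ∀ j, Ω j => ∏ j, p j (ω j)) (fun ω => ∏ j, q j (ω j)) =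
      ∑ j, klDiv (p j) (q j) := by
  by_cases hpq : ∀ j a, q j a = 0 → p j a = 0
  · exact klDiv_pi_of_absolutelyContinuous hp hpq
  push Not at hpq
  obtain ⟨i, a, hqa, hpa⟩ := hpq
  have support (j : ι) : ∃ b, p j b ≠ 0 := by
    obtain ⟨b, -, hb⟩ := Finset.exists_ne_zero_of_sum_ne_zero ((hp j).trans_ne one_ne_zero)
    exact ⟨b, hb⟩
  choose b hb using support
  let ω := Function.update b i a
  have hω : ω i = a := Function.update_self ..
  have hp_ne : ∏ j, p j (ω j) ≠ 0 := Finset.prod_ne_zero_iff.mpr fun j _ => by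
    rcases eq_or_ne j i with rfl | hj
    · rwa [hω]
    · rw [show ω j = b j from Function.update_of_ne hj ..]
      exact hb j
  have hq_zero : ∏ j, q j (ω j) = 0 := Finset.prod_eq_zero (Finset.mem_univ i) (hω ▸ hqa)
  have rest_ne_bot : ∑ j ∈ Finset.univ.erase i, klDiv (p j) (q j) ≠ ⊥ :=
    Finset.sum_induction _ (· ≠ ⊥) (fun _ _ hx hy => EReal.add_ne_bot_iff.mpr ⟨hx, hy⟩)
      EReal.zero_ne_bot fun j _ => klDiv_ne_bot _ _
  rw [klDiv_eq_top (a := ω) hq_zero hp_ne, ← Finset.add_sum_erase _ _ (Finset.mem_univ i),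
    klDiv_eq_top hqa hpa, EReal.top_add_of_ne_bot rest_ne_bot]

end Tensorization

theorem card_fin_filter_le_val {n i : ℕ} : Finset.card {j : Fin n | i ≤ j} = n - i := by
  simp_rw [← not_lt, Finset.filter_not, Finset.card_univ_sdiff, Fin.card_filter_val_lt,
    Fintype.card_fin, tsub_min]

theorem coe_mul_lt_top {c : ℝ} (hc : 0 ≤ c) {x : EReal} (hx : x < ⊤) : (c : EReal) * x < ⊤ := by
  rw [lt_top_iff_ne_top, EReal.mul_ne_top]
  simp [hc, hx.ne]

section Hybrid

theorem klDiv_pushf_channel_le {Ω α β γ M : Type*} [Fintype Ω] [Fintype α] [Fintype β] [Fintype M]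
    {p q : Ω → ℝ} (hp : ∀ ω, 0 ≤ p ω) (hq : ∀ ω, 0 ≤ q ω) {κ : γ → M → ℝ}
    (hκ : ∀ x, IsPMF (κ x)) {x : Ω → γ} {f : Ω → α} {g : Ω → β} (hxf : x.FactorsThrough f)
    (hgf : g.FactorsThrough f) :
    klDiv (pushf (fun w : M × Ω => κ (x w.2) w.1 * p w.2) (fun w => (w.1, g w.2)))
        (pushf (fun w : M × Ω => κ (x w.2) w.1 * q w.2) (fun w => (w.1, g w.2))) ≤
      klDiv (pushf p f) (pushf q f) := by
  cases isEmpty_or_nonempty Ω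
  · simp [klDiv, pushf]
  have : Nonempty γ := .map x ‹_›
  obtain ⟨e, rfl⟩ := (Function.factorsThrough_iff x).mp hxf
  calc
    klDiv (pushf (fun w : M × Ω => κ (e (f w.2)) w.1 * p w.2) (fun w => (w.1, g w.2)))
        (pushf (fun w : M × Ω => κ (e (f w.2)) w.1 * q w.2) (fun w => (w.1, g w.2)))
      ≤ klDiv (pushf (fun w : M × Ω => κ (e (f w.2)) w.1 * p w.2) (fun w => (w.1, f w.2)))
        (pushf (fun w : M × Ω => κ (e (f w.2)) w.1 * q w.2) (fun w => (w.1, f w.2))) :=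
      klDiv_pushf_le_of_factorsThrough (fun w => mul_nonneg ((hκ _).1 _) (hp _))
        (fun w => mul_nonneg ((hκ _).1 _) (hq _)) fun w w' h => by
          rw [Prod.mk.injEq] at h ⊢
          exact ⟨h.1, hgf h.2⟩
    _ = klDiv (pushf p f) (pushf q f) := by
      rw [pushf_channel (fun b => κ (e b)) p, pushf_channel (fun b => κ (e b)) q,
        klDiv_channel fun b => (hκ (e b)).2]

/-- The part of one letter `(x, y, z)` retained by the hybrid argument: the source symbol `x` with
its side information `y` when `c` holds and `z` otherwise. -/
def hybridLetter {X Y Z : Type*} (c : Prop) [Decidable c] (v : X × Y × Z) : X × (Y ⊕ Z) :=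
  (v.1, if c then .inl v.2.1 else .inr v.2.2)

theorem hybridLetter_eq_iff {X Y Z : Type*} {c : Prop} [Decidable c] {v v' : X × Y × Z} :
    hybridLetter c v = hybridLetter c v' ↔
      v.1 = v'.1 ∧ (c → v.2.1 = v'.2.1) ∧ (¬c → v.2.2 = v'.2.2) := by
  by_cases hc : c <;> simp [hybridLetter, hc]

theorem klDiv_pushf_hybridLetter_le {X Y Z : Type*} [Fintype X] [Fintype Y] [Fintype Z]
    {P Q : X × Y × Z → ℝ} (hP : ∀ v, 0 ≤ P v) (hQ : ∀ v, 0 ≤ Q v) (c : Prop) [Decidable c] :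
    klDiv (pushf P (hybridLetter c)) (pushf Q (hybridLetter c)) ≤
      if c then klDiv (pushf P fun v => (v.1, v.2.1)) (pushf Q fun v => (v.1, v.2.1))
      else klDiv (pushf P fun v => (v.1, v.2.2)) (pushf Q fun v => (v.1, v.2.2)) := by
  split_ifs with hc <;>
    exact klDiv_pushf_le_of_factorsThrough hP hQ fun v v' h => hybridLetter_eq_iff.mpr (by simp_all)

variable {ι : Type*} [Fintype ι] [DecidableEq ι] {X Y Z : ι → Type*} [∀ j, Fintype (X j)]
  [∀ j, Fintype (Y j)] [∀ j, Fintype (Z j)]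

theorem pushf_prod_hybridLetter (P : ∀ j, X j × Y j × Z j → ℝ) (r : ι → Prop) [DecidablePred r] :
    pushf (fun v : (∀ j, X j) × (∀ j, Y j) × (∀ j, Z j) => ∏ j, P j (v.1 j, v.2.1 j, v.2.2 j))
        (fun v j => hybridLetter (r j) (v.1 j, v.2.1 j, v.2.2 j)) =
      fun b => ∏ j, pushf (P j) (hybridLetter (r j)) (b j) := by
  let zip : (∀ j, X j) × (∀ j, Y j) × (∀ j, Z j) ≃ ∀ j, X j × Y j × Z j :=
    { toFun v j := (v.1 j, v.2.1 j, v.2.2 j)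
      invFun w := (fun j => (w j).1, fun j => (w j).2.1, fun j => (w j).2.2) }
  exact (pushf_comp_equiv zip _ _).trans (pushf_pi P fun j => hybridLetter (r j))

theorem hybrid_divergence_bound_general {M : Type*} [Fintype M] {P Q : ∀ j, X j × Y j × Z j → ℝ}
    (hP : ∀ j, IsPMF (P j)) (hQ : ∀ j v, 0 ≤ Q j v) {κ : (∀ j, X j) → M → ℝ}
    (hκ : ∀ x, IsPMF (κ x)) {r s : ι → Prop} [DecidablePred r] [DecidablePred s]
    (hrs : ∀ j, s j ↔ ¬r j) :
    klDiv
        (pushf (fun w : M × (∀ j, X j) × (∀ j, Y j) × (∀ j, Z j) =>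
            κ w.2.1 w.1 * ∏ j, P j (w.2.1 j, w.2.2.1 j, w.2.2.2 j))
          (fun w => (w.1, fun j : {j // r j} => w.2.2.1 j.1, fun j : {j // s j} => w.2.2.2 j.1)))
        (pushf (fun w : M × (∀ j, X j) × (∀ j, Y j) × (∀ j, Z j) =>
            κ w.2.1 w.1 * ∏ j, Q j (w.2.1 j, w.2.2.1 j, w.2.2.2 j))
          (fun w => (w.1, fun j : {j // r j} => w.2.2.1 j.1, fun j : {j // s j} => w.2.2.2 j.1))) ≤
      ∑ j with r j, klDiv (pushf (P j) fun v => (v.1, v.2.1)) (pushf (Q j) fun v => (v.1, v.2.1)) +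
        ∑ j with s j,
          klDiv (pushf (P j) fun v => (v.1, v.2.2)) (pushf (Q j) fun v => (v.1, v.2.2)) := by
  let f (v : (∀ j, X j) × (∀ j, Y j) × (∀ j, Z j)) (j : ι) :=
    hybridLetter (r j) (v.1 j, v.2.1 j, v.2.2 j)
  let g (v : (∀ j, X j) × (∀ j, Y j) × (∀ j, Z j)) :=
    (fun j : {j // r j} => v.2.1 j.1, fun j : {j // s j} => v.2.2 j.1)
  have source_factors : Function.FactorsThrough Prod.fst f := fun v v' h =>
    funext fun j => (hybridLetter_eq_iff.mp (congrFun h j)).1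
  have observation_factors : g.FactorsThrough f := fun v v' h => Prod.ext
    (funext fun j => (hybridLetter_eq_iff.mp (congrFun h j.1)).2.1 j.2)
    (funext fun j => (hybridLetter_eq_iff.mp (congrFun h j.1)).2.2 ((hrs j.1).mp j.2))
  have channel_bound := klDiv_pushf_channel_le
    (p := fun v => ∏ j, P j (v.1 j, v.2.1 j, v.2.2 j))
    (q := fun v => ∏ j, Q j (v.1 j, v.2.1 j, v.2.2 j))
    (fun v => Finset.prod_nonneg fun j _ => (hP j).1 _)
    (fun v => Finset.prod_nonneg fun j _ => hQ j _) hκ source_factors observation_factors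
  refine channel_bound.trans ?_
  simp only [f, pushf_prod_hybridLetter, hrs]
  rw [klDiv_pi fun j => (sum_pushf _ _).trans (hP j).2, ← Finset.sum_ite]
  gcongr with j
  exact klDiv_pushf_hybridLetter_le (hP j).1 (hQ j) (r j)

end Hybrid

/-- Hybrid divergence bound:
`D(P_{MY^iZ_{i+1}^n}‖Q_{MY^iZ_{i+1}^n}) ≤ i·D(P_XY‖Q_XY) + (n−i)·D(P_XZ‖Q_XZ)`;
in particular all these divergences are finite when both single-letter divergences are. -/
theorem hybrid_divergence_bound {X Y Z M : Type*}
    [Fintype X] [Fintype Y] [Fintype Z] [Fintype M] (n : ℕ)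
    (P Q : X × Y × Z → ℝ) (hP : IsPMF P) (hQ : IsPMF Q)
    (κ : (Fin n → X) → M → ℝ) (hκ : ∀ x, IsPMF (κ x)) :
    (∀ i : ℕ, i ≤ n →
      klDiv
        (pushf (fun w : M × (Fin n → X) × (Fin n → Y) × (Fin n → Z) =>
            κ w.2.1 w.1 * ∏ j, P (w.2.1 j, w.2.2.1 j, w.2.2.2 j))
          (fun w => (w.1, fun j : {j : Fin n // (j : ℕ) < i} => w.2.2.1 j.1,
            fun j : {j : Fin n // i ≤ (j : ℕ)} => w.2.2.2 j.1)))
        (pushf (fun w : M × (Fin n → X) × (Fin n → Y) × (Fin n → Z) =>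
            κ w.2.1 w.1 * ∏ j, Q (w.2.1 j, w.2.2.1 j, w.2.2.2 j))
          (fun w => (w.1, fun j : {j : Fin n // (j : ℕ) < i} => w.2.2.1 j.1,
            fun j : {j : Fin n // i ≤ (j : ℕ)} => w.2.2.2 j.1)))
      ≤ ((i : ℝ) : EReal) *
            klDiv (pushf P (fun v => (v.1, v.2.1))) (pushf Q (fun v => (v.1, v.2.1)))
        + (((n - i : ℕ) : ℝ) : EReal) *
            klDiv (pushf P (fun v => (v.1, v.2.2))) (pushf Q (fun v => (v.1, v.2.2)))) ∧
    (klDiv (pushf P (fun v => (v.1, v.2.1))) (pushf Q (fun v => (v.1, v.2.1))) < ⊤ →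
     klDiv (pushf P (fun v => (v.1, v.2.2))) (pushf Q (fun v => (v.1, v.2.2))) < ⊤ →
      ∀ i : ℕ, i ≤ n →
        klDiv
          (pushf (fun w : M × (Fin n → X) × (Fin n → Y) × (Fin n → Z) =>
              κ w.2.1 w.1 * ∏ j, P (w.2.1 j, w.2.2.1 j, w.2.2.2 j))
            (fun w => (w.1, fun j : {j : Fin n // (j : ℕ) < i} => w.2.2.1 j.1,
              fun j : {j : Fin n // i ≤ (j : ℕ)} => w.2.2.2 j.1)))
          (pushf (fun w : M × (Fin n → X) × (Fin n → Y) × (Fin n → Z) =>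
              κ w.2.1 w.1 * ∏ j, Q (w.2.1 j, w.2.2.1 j, w.2.2.2 j))
            (fun w => (w.1, fun j : {j : Fin n // (j : ℕ) < i} => w.2.2.1 j.1,
              fun j : {j : Fin n // i ≤ (j : ℕ)} => w.2.2.2 j.1))) < ⊤) := by
  have bound (i : ℕ) (_ : i ≤ n) := hybrid_divergence_bound_general (X := fun _ => X)
    (Y := fun _ => Y) (Z := fun _ => Z) (fun _ => hP) (fun _ => hQ.1) hκ
    (r := fun j : Fin n => j < i) (s := fun j : Fin n => i ≤ j) fun _ => not_lt.symm
  simp +contextual only [Finset.sum_const, Fin.card_filter_val_lt, min_eq_right,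
    card_fin_filter_le_val, EReal.nsmul_eq_mul, ← EReal.coe_natCast] at bound
  exact ⟨bound, fun hY hZ i hi => (bound i hi).trans_lt <| EReal.add_lt_top
    (coe_mul_lt_top i.cast_nonneg hY).ne (coe_mul_lt_top (n - i).cast_nonneg hZ).ne⟩

end
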